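/- With notation as in the previous statement, for every nonzero X = (X_1, X_2) ∈ ℝ^n × ℝ^n the symbol sequence 0 → S →^{σ_1} S ⊕ S →^{σ_2} S ⊕ S →^{σ_3} S → 0 is exact (σ_1 is injective, ker σ_2 = im σ_1, ker σ_3 = im σ_2, and σ_3 is surjective); consequently the Euler characteristic dim S - 2 dim S + 2 dim S - dim S of the complex is zero. -/

import Mathlib

/-!
By the Clifford relation, `A = c X₁` and `B = c X₂` satisfy `A² = -|X₁|²` and `B² = -|X₂|²`.
As `(X₁, X₂) ≠ 0`, at least one of these squares is a nonzero scalar, so `A` or `B` is invertible.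
Since `A²` and `B²` are scalars they commute with `A` and `B`, which gives a complex; inverting
whichever of `A`, `B` is invertible gives explicit preimages at each spot
(`symbol_exact_of_sq_scalar`).
-/

/-- Clifford multiplication by `X` squares to the scalar `-|X|²`: this is the Clifford relation
with `Y = X`, divided by two. -/
theorem clifford_sq {n : ℕ} {S : Type} [AddCommGroup S] [Module ℂ S]
    (c : (Fin n → ℝ) → S →ₗ[ℂ] S)
    (hclifford : ∀ (X Y : Fin n → ℝ) (ψ : S),
      c X (c Y ψ) + c Y (c X ψ) = ((-(2 * ∑ i, X i * Y i) : ℝ) : ℂ) • ψ)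
    (X : Fin n → ℝ) (ψ : S) :
    c X (c X ψ) = -(((X ⬝ᵥ X : ℝ) : ℂ) • ψ) := by
  have h := hclifford X X ψ
  rw [← two_smul ℂ] at h
  have h2 : c X (c X ψ) = (2 : ℂ)⁻¹ • ((2 : ℂ) • c X (c X ψ)) := by
    rw [inv_smul_smul₀ two_ne_zero]
  rw [h2, h, smul_smul, ← neg_smul]
  congr 1
  simp only [dotProduct]
  push_cast
  ring

/-- Exactness of the symbol sequence for any two operators whose squares are scalars `-a`, `-b`,
not both zero. -/
theorem symbol_exact_of_sq_scalar {S : Type} [AddCommGroup S] [Module ℂ S]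
    (A B : S →ₗ[ℂ] S) (a b : ℂ) (hA : ∀ ψ, A (A ψ) = -(a • ψ)) (hB : ∀ ψ, B (B ψ) = -(b • ψ))
    (hab : a ≠ 0 ∨ b ≠ 0) :
    Function.Injective (fun ψ : S => (A ψ, B ψ)) ∧
    (∀ p : S × S,
      (-(B (A p.1)) + A (A p.2) = 0 ∧ -(B (B p.1)) + A (B p.2) = 0) ↔
      ∃ ψ : S, (A ψ, B ψ) = p) ∧
    (∀ p : S × S,
      (-(B p.1) + A p.2 = 0) ↔
      ∃ q : S × S, (-(B (A q.1)) + A (A q.2), -(B (B q.1)) + A (B q.2)) = p) ∧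
    Function.Surjective (fun p : S × S => -(B p.1) + A p.2) := by
  refine ⟨?_, ?_, ?_, ?_⟩
  · intro ψ φ h
    obtain ⟨h1, h2⟩ := Prod.mk.inj h
    rcases hab with h0 | h0
    · have := congrArg A h1
      rw [hA, hA, neg_inj] at this
      exact smul_right_injective S h0 this
    · have := congrArg B h2
      rw [hB, hB, neg_inj] at this
      exact smul_right_injective S h0 this
  · rintro ⟨x, y⟩
    constructor
    · rintro ⟨h1, h2⟩
      dsimp only at h1 h2
      -- `ψ = A⁻¹ x` with `A⁻¹ = -A / a`, or `ψ = B⁻¹ y` with `B⁻¹ = -B / b`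
      rcases hab with h0 | h0
      · refine ⟨-(a⁻¹ • A x), ?_⟩
        have h3 : B (A x) = -(a • y) := by rw [← hA]; exact neg_add_eq_zero.mp h1
        simp [hA, h3, inv_smul_smul₀ h0]
      · refine ⟨-(b⁻¹ • B y), ?_⟩
        have h3 : A (B y) = -(b • x) := by rw [← hB]; exact (neg_add_eq_zero.mp h2).symm
        simp [hB, h3, inv_smul_smul₀ h0]
    · rintro ⟨ψ, h⟩
      obtain ⟨rfl, rfl⟩ := Prod.mk.inj h
      simp [hA, hB]
  · rintro ⟨x, y⟩
    constructor
    · intro h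
      have h3 : B x = A y := neg_add_eq_zero.mp h
      -- one entry of `q` can be taken to be zero; the other is then forced by `A²` or `B²`
      rcases hab with h0 | h0
      · refine ⟨(0, -(a⁻¹ • x)), ?_⟩
        simp [hA, h3, inv_smul_smul₀ h0]
      · refine ⟨(b⁻¹ • y, 0), ?_⟩
        simp [hB, ← h3, inv_smul_smul₀ h0]
    · rintro ⟨⟨u, v⟩, h⟩
      obtain ⟨rfl, rfl⟩ := Prod.mk.inj h
      simp only [hA, hB, map_add, map_neg, map_smul]
      abel
  · intro ψ
    rcases hab with h0 | h0
    · exact ⟨(0, -(a⁻¹ • A ψ)), by simp [hA, inv_smul_smul₀ h0]⟩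
    · exact ⟨(b⁻¹ • B ψ, 0), by simp [hB, inv_smul_smul₀ h0]⟩

/-- With `S` a complex spinor module over `Cl(ℝⁿ)` (`n ≥ 3`), Clifford
relation `X·Y·ψ + Y·X·ψ = -2⟨X,Y⟩ψ`, and `(X₁, X₂) ≠ (0,0)`, the symbol sequence
`0 → S →^{σ₁} S⊕S →^{σ₂} S⊕S →^{σ₃} S → 0` with
`σ₁(ψ) = (X₁·ψ, X₂·ψ)`,
`σ₂(ψ₁, ψ₂) = (-X₂·X₁·ψ₁ + X₁·X₁·ψ₂, -X₂·X₂·ψ₁ + X₁·X₂·ψ₂)`,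
`σ₃(φ₁, φ₂) = -X₂·φ₁ + X₁·φ₂`
is exact: `σ₁` is injective, `ker σ₂ = im σ₁`, `ker σ₃ = im σ₂`, and `σ₃` is surjective.
Consequently the Euler characteristic `dim S - 2 dim S + 2 dim S - dim S` of the complex
is zero. -/
theorem symbol_sequence_is_exact
    (n : ℕ) (hn : 3 ≤ n)
    (S : Type) [AddCommGroup S] [Module ℂ S]
    (c : (Fin n → ℝ) → S →ₗ[ℂ] S)
    (hadd : ∀ X Y : Fin n → ℝ, c (X + Y) = c X + c Y)
    (hsmul : ∀ (r : ℝ) (X : Fin n → ℝ), c (r • X) = (r : ℂ) • c X)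
    (hclifford : ∀ (X Y : Fin n → ℝ) (ψ : S),
      c X (c Y ψ) + c Y (c X ψ) = ((-(2 * ∑ i, X i * Y i) : ℝ) : ℂ) • ψ)
    (X₁ X₂ : Fin n → ℝ) (hX : (X₁, X₂) ≠ 0) :
    -- σ₁ is injective
    Function.Injective (fun ψ : S => (c X₁ ψ, c X₂ ψ)) ∧
    -- ker σ₂ = im σ₁
    (∀ p : S × S,
      (-(c X₂ (c X₁ p.1)) + c X₁ (c X₁ p.2) = 0 ∧
       -(c X₂ (c X₂ p.1)) + c X₁ (c X₂ p.2) = 0) ↔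
      ∃ ψ : S, (c X₁ ψ, c X₂ ψ) = p) ∧
    -- ker σ₃ = im σ₂
    (∀ p : S × S,
      (-(c X₂ p.1) + c X₁ p.2 = 0) ↔
      ∃ q : S × S,
        (-(c X₂ (c X₁ q.1)) + c X₁ (c X₁ q.2),
         -(c X₂ (c X₂ q.1)) + c X₁ (c X₂ q.2)) = p) ∧
    -- σ₃ is surjective
    Function.Surjective (fun p : S × S => -(c X₂ p.1) + c X₁ p.2) ∧
    -- Euler characteristic of the complex is zero
    ((Module.finrank ℂ S : ℤ) - 2 * (Module.finrank ℂ S : ℤ) +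
      2 * (Module.finrank ℂ S : ℤ) - (Module.finrank ℂ S : ℤ) = 0) := by
  have hab : ((X₁ ⬝ᵥ X₁ : ℝ) : ℂ) ≠ 0 ∨ ((X₂ ⬝ᵥ X₂ : ℝ) : ℂ) ≠ 0 := by
    by_contra! h
    simp only [Complex.ofReal_eq_zero, dotProduct_self_eq_zero] at h
    exact hX (Prod.ext h.1 h.2)
  obtain ⟨h1, h2, h3, h4⟩ := symbol_exact_of_sq_scalar (c X₁) (c X₂) _ _
    (clifford_sq c hclifford X₁) (clifford_sq c hclifford X₂) hab
  exact ⟨h1, h2, h3, h4, by ring⟩
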